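/- There exists a constant C > 0 such that for i = 0,1,2 and every x ∈ G with 0 < r(x) < 1, one has sup_{t>0} |X_i p_t(x)| ≤ C r(x)⁻⁴. -/

import Mathlib

open MeasureTheory Real Filter Set
open scoped ENNReal

noncomputable section

/-- The group `G = ℝ² ⋊ ℝ⁺`, realized as triples `(x₁, x₂, a)` (only `a > 0` is relevant). -/
abbrev G : Type := ℝ × ℝ × ℝ

/-- Group product `(x₁,x₂,a)·(x₁',x₂',a') = (x₁+a x₁', x₂+a x₂', a a')`. -/
def gMul (x y : G) : G := (x.1 + x.2.2 * y.1, x.2.1 + x.2.2 * y.2.1, x.2.2 * y.2.2)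

/-- Group inverse `(x₁,x₂,a)⁻¹ = (−x₁/a, −x₂/a, 1/a)`. -/
def gInv (x : G) : G := (-x.1 / x.2.2, -x.2.1 / x.2.2, 1 / x.2.2)

/-- The identity `e = (0,0,1)`. -/
def gE : G := (0, 0, 1)

/-- The right Haar measure `dρ = a⁻¹ dx₁ dx₂ da` (supported where `a > 0`). -/
def ρG : Measure G :=
  (volume : Measure G).withDensity fun x => ENNReal.ofReal (if 0 < x.2.2 then x.2.2⁻¹ else 0)

/-- The modular function `δ(x₁,x₂,a) = a⁻²`. -/
def deltaG (x : G) : ℝ := (x.2.2 ^ 2)⁻¹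

/-- `|x| = √(x₁² + x₂²)`. -/
def normG (x : G) : ℝ := Real.sqrt (x.1 ^ 2 + x.2.1 ^ 2)

/-- `cosh r(x) = (a + a⁻¹ + a⁻¹|x|²)/2`. -/
def coshArg (x : G) : ℝ := (x.2.2 + x.2.2⁻¹ + x.2.2⁻¹ * (x.1 ^ 2 + x.2.1 ^ 2)) / 2

/-- `r(x) ≥ 0` is determined by `cosh r(x) = coshArg x`; explicitly `r = arcosh (coshArg x)`. -/
def rG (x : G) : ℝ := Real.log (coshArg x + Real.sqrt (coshArg x ^ 2 - 1))

/-- The left-invariant distance `d(x,y) = r(x⁻¹y)`. -/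
def dG (x y : G) : ℝ := rG (gMul (gInv x) y)

/-- The heat kernel
`p_t(x) = (8π^{3/2})⁻¹ δ(x)^{1/2} (r(x)/sinh r(x)) t^{−3/2} exp(−r(x)²/(4t))`,
with `r/sinh r := 1` at `x = e`. -/
def heatK (t : ℝ) (x : G) : ℝ :=
  (8 * Real.pi ^ ((3 : ℝ)/2))⁻¹ * Real.sqrt (deltaG x) *
    (if rG x = 0 then 1 else rG x / Real.sinh (rG x)) *
    t ^ (-(3 : ℝ)/2) * Real.exp (-(rG x ^ 2) / (4 * t))

/-- Convolution `f ∗ p_t(x) = ∫ f(xy⁻¹) p_t(y) dρ(y)`. -/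
def convHeat (f : G → ℝ) (t : ℝ) (x : G) : ℝ := ∫ y, f (gMul x (gInv y)) * heatK t y ∂ρG

/-- The heat maximal operator `Mf(x) = sup_{t>0} |f ∗ p_t(x)|` (valued in `ℝ≥0∞`). -/
def maxHeat (f : G → ℝ) (x : G) : ℝ≥0∞ :=
  ⨆ (t : ℝ) (_ : 0 < t), ENNReal.ofReal |convHeat f t x|

/-- Calderón–Zygmund sets. -/
def IsCZ (R : Set G) : Prop :=
  ∃ c : G, ∃ L r : ℝ, 0 < c.2.2 ∧ 0 < L ∧ 0 < r ∧
    R = Set.Icc (c.1 - L/2) (c.1 + L/2) ×ˢ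
        (Set.Icc (c.2.1 - L/2) (c.2.1 + L/2) ×ˢ
         Set.Icc (c.2.2 * Real.exp (-r)) (c.2.2 * Real.exp r)) ∧
    (r < 1 → Real.exp 2 * c.2.2 * r ≤ L ∧ L < Real.exp 8 * c.2.2 * r) ∧
    (1 ≤ r → c.2.2 * Real.exp (2*r) ≤ L ∧ L < c.2.2 * Real.exp (8*r))

/-- Atoms: `A ∈ L¹(ρ)` supported in a Calderón–Zygmund set `R`, with
`‖A‖_∞ ≤ ρ(R)⁻¹` and `∫ A dρ = 0`. -/
def IsAtomG (A : G → ℝ) : Prop :=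
  Integrable A ρG ∧
  ∃ R : Set G, IsCZ R ∧ (∀ x ∉ R, A x = 0) ∧
    eLpNorm A ⊤ ρG ≤ (ρG R)⁻¹ ∧
    ∫ x, A x ∂ρG = 0

/-- `f = Σ_j lam_j A_j` with atoms `A_j`, `Σ_j |lam_j| < ∞`, converging in `L¹(ρ)`. -/
def IsH1Decomp (f : G → ℝ) (lam : ℕ → ℝ) (A : ℕ → G → ℝ) : Prop :=
  (∀ j, IsAtomG (A j)) ∧ Summable (fun j => |lam j|) ∧
  Tendsto (fun N => eLpNorm (fun x => f x - ∑ j ∈ Finset.range N, lam j * A j x) 1 ρG)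
    atTop (nhds 0)

/-- The Hardy space `H¹`. -/
def MemH1 (f : G → ℝ) : Prop :=
  Integrable f ρG ∧ ∃ lam A, IsH1Decomp f lam A

/-- `‖f‖_{H¹} = inf Σ_j |lam_j|` over all atomic decompositions. -/
def H1norm (f : G → ℝ) : ℝ :=
  sInf {s | ∃ lam A, IsH1Decomp f lam A ∧ s = ∑' j, |lam j|}

/-- The left-invariant vector field `X₀ = a ∂_a`. -/
def X0 (f : G → ℝ) (x : G) : ℝ := x.2.2 * deriv (fun s => f (x.1, x.2.1, s)) x.2.2

/-- The left-invariant vector field `X₁ = a ∂_{x₁}`. -/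
def X1 (f : G → ℝ) (x : G) : ℝ := x.2.2 * deriv (fun s => f (s, x.2.1, x.2.2)) x.1

/-- The left-invariant vector field `X₂ = a ∂_{x₂}`. -/
def X2 (f : G → ℝ) (x : G) : ℝ := x.2.2 * deriv (fun s => f (x.1, s, x.2.2)) x.2.1

/-- `‖∇p_t(x)‖`, the Euclidean norm of `(X₀p_t, X₁p_t, X₂p_t)` at `x`. -/
def gradHeatNorm (t : ℝ) (x : G) : ℝ :=
  Real.sqrt (X0 (heatK t) x ^ 2 + X1 (heatK t) x ^ 2 + X2 (heatK t) x ^ 2)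

/-- The Poisson kernel `q_t(x) = π⁻² δ(x)^{1/2} (r(x)/sinh r(x)) · t/(t²+r(x)²)²`. -/
def poissonK (t : ℝ) (x : G) : ℝ :=
  (Real.pi ^ 2)⁻¹ * Real.sqrt (deltaG x) *
    (if rG x = 0 then 1 else rG x / Real.sinh (rG x)) *
    (t / (t ^ 2 + rG x ^ 2) ^ 2)

/-- Convolution `f ∗ q_t(x) = ∫ f(xy⁻¹) q_t(y) dρ(y)`. -/
def convPoisson (f : G → ℝ) (t : ℝ) (x : G) : ℝ := ∫ y, f (gMul x (gInv y)) * poissonK t y ∂ρG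

/-- The Poisson maximal operator `M̃f(x) = sup_{t>0} |f ∗ q_t(x)|`. -/
def maxPoisson (f : G → ℝ) (x : G) : ℝ≥0∞ :=
  ⨆ (t : ℝ) (_ : 0 < t), ENNReal.ofReal |convPoisson f t x|

/-- `G_{r₁}(x) = sup_{z ∈ B(x,r₁/2)} sup_{t>0} ‖∇p_t(z)‖`. -/
def Gsup (r1 : ℝ) (x : G) : ℝ≥0∞ :=
  ⨆ (z : G) (_ : 0 < z.2.2 ∧ dG x z < r1 / 2) (t : ℝ) (_ : 0 < t),
    ENNReal.ofReal (gradHeatNorm t z)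

/-- `R₀ = [−1,1]×[−1,1]×[e⁻¹,e]`. -/
def R0set : Set G :=
  Set.Icc (-1 : ℝ) 1 ×ˢ (Set.Icc (-1 : ℝ) 1 ×ˢ Set.Icc (Real.exp (-1)) (Real.exp 1))

/-- `R_L = [L−1,L+1]×[−1,1]×[e⁻¹,e]`. -/
def RLset (L : ℝ) : Set G :=
  Set.Icc (L - 1) (L + 1) ×ˢ (Set.Icc (-1 : ℝ) 1 ×ˢ Set.Icc (Real.exp (-1)) (Real.exp 1))

/-- `f_L = χ_{R_L} − χ_{R₀}`. -/
def fL (L : ℝ) : G → ℝ := fun x =>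
  (RLset L).indicator (fun _ => (1 : ℝ)) x - R0set.indicator (fun _ => (1 : ℝ)) x

/-- The mean of `g` over `R` with respect to `ρ`. -/
def czMean (g : G → ℝ) (R : Set G) : ℝ := (∫ x in R, g x ∂ρG) / (ρG R).toReal

/-- `‖g‖_{BMO} = sup_R ρ(R)⁻¹ ∫_R |g − g_R| dρ` over Calderón–Zygmund sets `R`. -/
def czBMO (g : G → ℝ) : ℝ≥0∞ :=
  ⨆ (R : Set G) (_ : IsCZ R),
    (ρG R)⁻¹ * ∫⁻ x in R, ENNReal.ofReal |g x - czMean g R| ∂ρG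

/-- `‖h‖_{BMO(ℝ)} = sup_Q |Q|⁻¹ ∫_Q |h − h_Q|` over bounded intervals `Q ⊂ ℝ`. -/
def lineBMO (h : ℝ → ℝ) : ℝ≥0∞ :=
  ⨆ (a : ℝ) (b : ℝ) (_ : a < b),
    (ENNReal.ofReal (b - a))⁻¹ *
      ∫⁻ s in Set.Icc a b, ENNReal.ofReal |h s - (∫ u in Set.Icc a b, h u) / (b - a)|

/-- `2R₀ = [−2,2]×[−2,2]×[e⁻²,e²]`. -/
def twoR0set : Set G :=
  Set.Icc (-2 : ℝ) 2 ×ˢ (Set.Icc (-2 : ℝ) 2 ×ˢ Set.Icc (Real.exp (-2)) (Real.exp 2))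

/-- The set `{x₁ > 3, |x₂| < 1, e⁻¹ < a < e}`. -/
def domSpecial : Set G :=
  {x : G | 3 < x.1 ∧ |x.2.1| < 1 ∧ Real.exp (-1) < x.2.2 ∧ x.2.2 < Real.exp 1}

/-- The function equal to `1/(x₁ (log x₁)^{3/2})` on `{x₁ > 3, |x₂| < 1, e⁻¹ < a < e}`,
to `c₀` on `R₀`, and `0` elsewhere. -/
def fSpecial (c0 : ℝ) : G → ℝ := fun x =>
  domSpecial.indicator (fun y => (y.1 * Real.log y.1 ^ ((3 : ℝ)/2))⁻¹) x
    + R0set.indicator (fun _ => c0) x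

/-!
Off the identity the heat kernel is `δ^{1/2}` times a function of the distance `r` alone. The
distance solves the eikonal equation `∑ (Xᵢ r)² = 1`, because `∑ (Xᵢ cosh r)² = sinh² r`, while
`δ^{1/2} = a⁻¹` is an eigenfunction of `X₀` with eigenvalue `-1` and is annihilated by `X₁` and
`X₂`. Since `|r⁻¹ - coth r| ≤ 1`, this gives the pointwise bound `‖∇pₜ‖ ≤ pₜ · (2 + r / (2t))`.
The powers of `t` are absorbed by the Gaussian factor, at the price of `r⁻³` and `r⁻⁴`, and
`δ^{1/2} ≤ eʳ` compensates for `r / sinh r`, so that `‖∇pₜ‖ ≲ (1 + r)² r⁻⁴` away from the identity.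
-/

section RealInequalities

lemma sinh_le_mul_cosh {r : ℝ} (hr : 0 ≤ r) : sinh r ≤ r * cosh r := by
  have mvt : sinh r - sinh 0 ≤ cosh r * (r - 0) := by
    refine (convex_Icc 0 r).image_sub_le_mul_sub_of_deriv_le continuous_sinh.continuousOn
      differentiable_sinh.differentiableOn (fun s hs ↦ ?_) 0 (left_mem_Icc.2 hr)
      r (right_mem_Icc.2 hr) hr
    rw [interior_Icc] at hs
    rw [Real.deriv_sinh, cosh_le_cosh, abs_of_pos hs.1, abs_of_nonneg hr]
    exact hs.2.le
  rw [sinh_zero] at mvt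
  linarith

lemma abs_inv_sub_cosh_div_sinh_le_one {r : ℝ} (hr : 0 < r) :
    |r⁻¹ - cosh r / sinh r| ≤ 1 := by
  have hsinh : 0 < sinh r := sinh_pos_iff.2 hr
  have upper : r⁻¹ ≤ cosh r / sinh r := by
    rw [inv_eq_one_div, div_le_div_iff₀ hr hsinh]
    linarith [sinh_le_mul_cosh hr.le]
  have lower : cosh r / sinh r ≤ r⁻¹ + 1 := by
    have hexp : r * (cosh r - sinh r) ≤ sinh r := by
      rw [cosh_sub_sinh]
      calc r * exp (-r) ≤ r * 1 := by gcongr; exact exp_le_one_iff.2 (by linarith)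
        _ ≤ sinh r := by rw [mul_one]; exact self_le_sinh_iff.2 hr.le
    have : r⁻¹ + 1 = (1 + r) / r := by field_simp
    rw [this, div_le_div_iff₀ hsinh hr]
    linarith
  rw [abs_le]
  constructor <;> linarith

lemma exp_mul_div_sinh_le {r : ℝ} (hr : 0 < r) : exp r * (r / sinh r) ≤ 1 + 2 * r := by
  have hexp : (1 + 2 * r) * exp (-r) ≤ exp r := by
    calc (1 + 2 * r) * exp (-r) ≤ exp (2 * r) * exp (-r) := by
          gcongr; linarith [add_one_le_exp (2 * r)]
      _ = exp r := by rw [← exp_add]; ring_nf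
  rw [← mul_div_assoc, div_le_iff₀ (sinh_pos_iff.2 hr), sinh_eq]
  linarith

lemma rpow_mul_exp_neg_le {y α : ℝ} (hy : 0 ≤ y) (hα : 0 < α) :
    y ^ α * exp (-y) ≤ α ^ α := by
  have hle : y / α ≤ exp (y / α) := by linarith [add_one_le_exp (y / α)]
  have hpow : (y / α) ^ α ≤ exp y := by
    calc (y / α) ^ α ≤ exp (y / α) ^ α := by gcongr
      _ = exp y := by rw [← exp_mul, div_mul_cancel₀ y hα.ne']
  rw [div_rpow hy hα.le, div_le_iff₀ (by positivity)] at hpow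
  rw [exp_neg, ← div_eq_mul_inv, div_le_iff₀ (exp_pos y)]
  linarith

lemma rpow_neg_mul_exp_neg_div_le {t b α : ℝ} (ht : 0 < t) (hb : 0 < b) (hα : 0 < α) :
    t ^ (-α) * exp (-(b / t)) ≤ (α / b) ^ α := by
  have hpow : t ^ (-α) = (b / t) ^ α / b ^ α := by
    rw [div_rpow hb.le ht.le, rpow_neg ht.le]
    field_simp
  calc t ^ (-α) * exp (-(b / t)) = (b / t) ^ α * exp (-(b / t)) / b ^ α := by rw [hpow]; ring
    _ ≤ α ^ α / b ^ α := by gcongr; exact rpow_mul_exp_neg_le (by positivity) hα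
    _ = (α / b) ^ α := (div_rpow hα.le hb.le α).symm

lemma rpow_neg_mul_exp_neg_sq_div_le {t r α : ℝ} (ht : 0 < t) (hr : 0 < r) (hα : 0 < α) :
    t ^ (-α) * exp (-(r ^ 2) / (4 * t)) ≤ (4 * α) ^ α / r ^ (2 * α) := by
  have hexp : -(r ^ 2) / (4 * t) = -(r ^ 2 / 4 / t) := by field_simp
  have hpow : (α / (r ^ 2 / 4)) ^ α = (4 * α) ^ α / r ^ (2 * α) := by
    rw [rpow_mul hr.le, rpow_two, ← div_rpow (by positivity) (by positivity)]
    congr 1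
    field_simp
  rw [hexp, ← hpow]
  exact rpow_neg_mul_exp_neg_div_le ht (by positivity) hα

end RealInequalities

section Distance

variable {x : G}

lemma sqrt_deltaG (ha : 0 < x.2.2) : √(deltaG x) = x.2.2⁻¹ := by
  rw [deltaG, ← inv_pow, sqrt_sq (inv_pos.2 ha).le]

lemma coshArg_sq_sub_one (ha : x.2.2 ≠ 0) :
    coshArg x ^ 2 - 1 =
      ((x.2.2 - x.2.2⁻¹ - x.2.2⁻¹ * (x.1 ^ 2 + x.2.1 ^ 2)) / 2) ^ 2 + x.1 ^ 2 + x.2.1 ^ 2 := by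
  rw [coshArg]
  field_simp
  ring

lemma one_le_coshArg (ha : 0 < x.2.2) : 1 ≤ coshArg x := by
  have hnonneg : 0 ≤ coshArg x := by unfold coshArg; positivity
  have hsq : 0 ≤ coshArg x ^ 2 - 1 := by rw [coshArg_sq_sub_one ha.ne']; positivity
  exact (one_le_sq_iff₀ hnonneg).1 (by linarith)

lemma rG_eq_arcosh (x : G) : rG x = arcosh (coshArg x) := rfl

lemma rG_nonneg (ha : 0 < x.2.2) : 0 ≤ rG x :=
  arcosh_nonneg (one_le_coshArg ha)

lemma cosh_rG (ha : 0 < x.2.2) : cosh (rG x) = coshArg x :=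
  cosh_arcosh (one_le_coshArg ha)

lemma one_lt_coshArg (ha : 0 < x.2.2) (hr : 0 < rG x) : 1 < coshArg x := by
  rw [← cosh_rG ha]
  exact one_lt_cosh.2 hr.ne'

lemma sinh_rG_sq (ha : 0 < x.2.2) :
    sinh (rG x) ^ 2 =
      ((x.2.2 - x.2.2⁻¹ - x.2.2⁻¹ * (x.1 ^ 2 + x.2.1 ^ 2)) / 2) ^ 2 + x.1 ^ 2 + x.2.1 ^ 2 := by
  rw [sinh_sq, cosh_rG ha, coshArg_sq_sub_one ha.ne']

lemma inv_le_exp_rG (ha : 0 < x.2.2) : x.2.2⁻¹ ≤ exp (rG x) := by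
  have hsinh : -sinh (rG x) ≤ (x.2.2 - x.2.2⁻¹ - x.2.2⁻¹ * (x.1 ^ 2 + x.2.1 ^ 2)) / 2 := by
    refine (abs_le_of_sq_le_sq' ?_ (sinh_nonneg_iff.2 (rG_nonneg ha))).1
    rw [sinh_rG_sq ha]
    linarith [sq_nonneg x.1, sq_nonneg x.2.1]
  have hnonneg : 0 ≤ x.2.2⁻¹ * (x.1 ^ 2 + x.2.1 ^ 2) := by positivity
  rw [← cosh_add_sinh, cosh_rG ha, coshArg]
  linarith

lemma hasDerivAt_rG_comp {γ : ℝ → G} {s c' : ℝ}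
    (hγ : HasDerivAt (fun u ↦ coshArg (γ u)) c' s) (h : 1 < coshArg (γ s)) :
    HasDerivAt (fun u ↦ rG (γ u)) (c' / sinh (rG (γ s))) s := by
  simp only [rG_eq_arcosh, sinh_arcosh h.le, div_eq_inv_mul]
  exact HasDerivAt.comp (h₂ := arcosh) s (hasDerivAt_arcosh h) hγ

lemma hasDerivAt_rG_fst (ha : 0 < x.2.2) (hr : 0 < rG x) :
    HasDerivAt (fun s ↦ rG (s, x.2.1, x.2.2)) (x.2.2⁻¹ * x.1 / sinh (rG x)) x.1 := by
  refine hasDerivAt_rG_comp (γ := fun s ↦ (s, x.2.1, x.2.2)) ?_ (one_lt_coshArg ha hr)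
  refine ((((hasDerivAt_pow 2 x.1).add_const (x.2.1 ^ 2)).const_mul x.2.2⁻¹).const_add
    (x.2.2 + x.2.2⁻¹)).div_const 2 |>.congr_deriv ?_
  norm_num
  ring

lemma hasDerivAt_rG_snd (ha : 0 < x.2.2) (hr : 0 < rG x) :
    HasDerivAt (fun s ↦ rG (x.1, s, x.2.2)) (x.2.2⁻¹ * x.2.1 / sinh (rG x)) x.2.1 := by
  refine hasDerivAt_rG_comp (γ := fun s ↦ (x.1, s, x.2.2)) ?_ (one_lt_coshArg ha hr)
  refine ((((hasDerivAt_pow 2 x.2.1).const_add (x.1 ^ 2)).const_mul x.2.2⁻¹).const_add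
    (x.2.2 + x.2.2⁻¹)).div_const 2 |>.congr_deriv ?_
  norm_num
  ring

lemma hasDerivAt_rG_scale (ha : 0 < x.2.2) (hr : 0 < rG x) :
    HasDerivAt (fun s ↦ rG (x.1, x.2.1, s))
      ((1 - (x.2.2 ^ 2)⁻¹ - (x.2.2 ^ 2)⁻¹ * (x.1 ^ 2 + x.2.1 ^ 2)) / 2 / sinh (rG x)) x.2.2 := by
  refine hasDerivAt_rG_comp (γ := fun s ↦ (x.1, x.2.1, s)) ?_ (one_lt_coshArg ha hr)
  have hinv := hasDerivAt_inv ha.ne'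
  refine (((hasDerivAt_id x.2.2).add hinv).add
    (hinv.mul_const (x.1 ^ 2 + x.2.1 ^ 2))).div_const 2 |>.congr_deriv ?_
  ring

lemma X0_rG (ha : 0 < x.2.2) (hr : 0 < rG x) :
    X0 rG x =
      (x.2.2 - x.2.2⁻¹ - x.2.2⁻¹ * (x.1 ^ 2 + x.2.1 ^ 2)) / 2 / sinh (rG x) := by
  rw [X0, (hasDerivAt_rG_scale ha hr).deriv]
  field_simp

lemma X1_rG (ha : 0 < x.2.2) (hr : 0 < rG x) : X1 rG x = x.1 / sinh (rG x) := by
  rw [X1, (hasDerivAt_rG_fst ha hr).deriv]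
  field_simp

lemma X2_rG (ha : 0 < x.2.2) (hr : 0 < rG x) : X2 rG x = x.2.1 / sinh (rG x) := by
  rw [X2, (hasDerivAt_rG_snd ha hr).deriv]
  field_simp

lemma eikonal_rG (ha : 0 < x.2.2) (hr : 0 < rG x) :
    X0 rG x ^ 2 + X1 rG x ^ 2 + X2 rG x ^ 2 = 1 := by
  rw [X0_rG ha hr, X1_rG ha hr, X2_rG ha hr, div_pow _ (sinh _), div_pow x.1, div_pow x.2.1,
    ← add_div, ← add_div, ← sinh_rG_sq ha, div_self (pow_pos (sinh_pos_iff.2 hr) 2).ne']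

end Distance

section RadialHeat

/-- The radial factor of the heat kernel: `pₜ = δ^{1/2} · radialHeat t ∘ r` away from the identity.
At `r = 0` it takes the junk value `0` instead of the limit as `r → 0`. -/
def radialHeat (t r : ℝ) : ℝ :=
  (8 * π ^ ((3 : ℝ) / 2))⁻¹ * (r / sinh r) * t ^ (-(3 : ℝ) / 2) * exp (-(r ^ 2) / (4 * t))

variable {t r : ℝ}

lemma radialHeat_nonneg (ht : 0 < t) (hr : 0 < r) : 0 ≤ radialHeat t r := by
  have : 0 < sinh r := sinh_pos_iff.2 hr
  unfold radialHeat
  positivity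

lemma hasDerivAt_radialHeat (t : ℝ) (hr : 0 < r) :
    HasDerivAt (radialHeat t)
      (radialHeat t r * (r⁻¹ - cosh r / sinh r - r / (2 * t))) r := by
  have hsinh : sinh r ≠ 0 := (sinh_pos_iff.2 hr).ne'
  have hquot := (hasDerivAt_id r).div (hasDerivAt_sinh r) hsinh
  have hgauss := ((hasDerivAt_pow 2 r).fun_neg.div_const (4 * t)).exp
  refine (((hquot.const_mul (8 * π ^ ((3 : ℝ) / 2))⁻¹).mul_const (t ^ (-(3 : ℝ) / 2))).mul
    hgauss).congr_deriv ?_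
  simp only [radialHeat, Pi.div_apply, id]
  field_simp
  ring

lemma abs_deriv_radialHeat_le (ht : 0 < t) (hr : 0 < r) :
    |deriv (radialHeat t) r| ≤ radialHeat t r * (1 + r / (2 * t)) := by
  have htime : |r / (2 * t)| = r / (2 * t) := abs_of_pos (by positivity)
  rw [(hasDerivAt_radialHeat t hr).deriv, abs_mul, abs_of_nonneg (radialHeat_nonneg ht hr)]
  gcongr
  · exact radialHeat_nonneg ht hr
  · calc |r⁻¹ - cosh r / sinh r - r / (2 * t)|
        ≤ |r⁻¹ - cosh r / sinh r| + |r / (2 * t)| := abs_sub _ _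
      _ ≤ 1 + r / (2 * t) := by
        rw [htime]; gcongr; exact abs_inv_sub_cosh_div_sinh_le_one hr

lemma exists_radialHeat_mul_le :
    ∃ K > (0 : ℝ), ∀ r > 0, ∀ t > 0,
      radialHeat t r * (2 + r / (2 * t)) ≤ K * (1 + r) / r ^ 4 * (r / sinh r) := by
  set c : ℝ := (8 * π ^ ((3 : ℝ) / 2))⁻¹ with hc
  set A : ℝ := 2 * 6 ^ ((3 : ℝ) / 2)
  set B : ℝ := 10 ^ ((5 : ℝ) / 2) / 2
  refine ⟨c * (A + B), by positivity, fun r hr t ht ↦ ?_⟩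
  have : 0 < sinh r := sinh_pos_iff.2 hr
  set E := exp (-(r ^ 2) / (4 * t))
  have gauss₃ : t ^ (-(3 : ℝ) / 2) * E ≤ 6 ^ ((3 : ℝ) / 2) / r ^ 3 := by
    convert rpow_neg_mul_exp_neg_sq_div_le (α := 3 / 2) ht hr (by norm_num) using 3 <;> norm_num
  have gauss₅ : t ^ (-(5 : ℝ) / 2) * E ≤ 10 ^ ((5 : ℝ) / 2) / r ^ 5 := by
    convert rpow_neg_mul_exp_neg_sq_div_le (α := 5 / 2) ht hr (by norm_num) using 3 <;> norm_num
  have htime : t ^ (-(3 : ℝ) / 2) / t = t ^ (-(5 : ℝ) / 2) := by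
    rw [← rpow_sub_one ht.ne']; norm_num
  calc radialHeat t r * (2 + r / (2 * t))
      = c * (r / sinh r) * (2 * (t ^ (-(3 : ℝ) / 2) * E) + r / 2 * (t ^ (-(5 : ℝ) / 2) * E)) := by
        rw [radialHeat, ← hc, ← htime]; ring
    _ ≤ c * (r / sinh r) * (2 * (6 ^ ((3 : ℝ) / 2) / r ^ 3)
          + r / 2 * (10 ^ ((5 : ℝ) / 2) / r ^ 5)) := by gcongr
    _ = c * (A * r + B) / r ^ 4 * (r / sinh r) := by simp only [A, B]; field_simp
    _ ≤ c * (A + B) * (1 + r) / r ^ 4 * (r / sinh r) := by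
        rw [mul_assoc c]
        gcongr
        have hA : 0 < A := by positivity
        have hB : 0 < B := by positivity
        nlinarith [mul_pos hB hr]

end RadialHeat

section HeatKernel

variable {x : G} {t : ℝ}

lemma heatK_eq_sqrt_deltaG_mul_radialHeat (t : ℝ) (hr : rG x ≠ 0) :
    heatK t x = √(deltaG x) * radialHeat t (rG x) := by
  rw [heatK, radialHeat, if_neg hr]
  ring

lemma hasDerivAt_heatK_comp (t : ℝ) {γ : ℝ → G} {s w r' : ℝ}
    (hw : HasDerivAt (fun u ↦ √(deltaG (γ u))) w s)
    (hr : HasDerivAt (fun u ↦ rG (γ u)) r' s) (hpos : 0 < rG (γ s)) :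
    HasDerivAt (fun u ↦ heatK t (γ u))
      (w * radialHeat t (rG (γ s)) + √(deltaG (γ s)) * (deriv (radialHeat t) (rG (γ s)) * r'))
      s := by
  have hradial :=
    (hasDerivAt_radialHeat t hpos).differentiableAt.hasDerivAt.comp s hr
  refine (hw.mul hradial).congr_of_eventuallyEq ?_
  filter_upwards [hr.continuousAt.eventually_ne hpos.ne'] with u hu
  exact heatK_eq_sqrt_deltaG_mul_radialHeat t hu

lemma X0_heatK (t : ℝ) (ha : 0 < x.2.2) (hr : 0 < rG x) :
    X0 (heatK t) x =
      √(deltaG x) * (deriv (radialHeat t) (rG x) * X0 rG x - radialHeat t (rG x)) := by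
  have hw : HasDerivAt (fun s ↦ √(deltaG (x.1, x.2.1, s))) (-(x.2.2 ^ 2)⁻¹) x.2.2 := by
    refine (hasDerivAt_inv ha.ne').congr_of_eventuallyEq ?_
    filter_upwards [lt_mem_nhds ha] with s hs
    exact sqrt_deltaG hs
  have hr' := (hasDerivAt_rG_scale ha hr).differentiableAt.hasDerivAt
  rw [X0, (hasDerivAt_heatK_comp t hw hr' hr).deriv, X0, sqrt_deltaG ha]
  field_simp
  ring

lemma X1_heatK (t : ℝ) (ha : 0 < x.2.2) (hr : 0 < rG x) :
    X1 (heatK t) x = √(deltaG x) * (deriv (radialHeat t) (rG x) * X1 rG x) := by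
  have hw : HasDerivAt (fun s ↦ √(deltaG (s, x.2.1, x.2.2))) 0 x.1 :=
    hasDerivAt_const x.1 √((x.2.2 ^ 2)⁻¹)
  have hr' := (hasDerivAt_rG_fst ha hr).differentiableAt.hasDerivAt
  rw [X1, (hasDerivAt_heatK_comp t hw hr' hr).deriv, X1]
  ring

lemma X2_heatK (t : ℝ) (ha : 0 < x.2.2) (hr : 0 < rG x) :
    X2 (heatK t) x = √(deltaG x) * (deriv (radialHeat t) (rG x) * X2 rG x) := by
  have hw : HasDerivAt (fun s ↦ √(deltaG (x.1, s, x.2.2))) 0 x.2.1 :=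
    hasDerivAt_const x.2.1 √((x.2.2 ^ 2)⁻¹)
  have hr' := (hasDerivAt_rG_snd ha hr).differentiableAt.hasDerivAt
  rw [X2, (hasDerivAt_heatK_comp t hw hr' hr).deriv, X2]
  ring

lemma gradHeatNorm_le (ha : 0 < x.2.2) (hr : 0 < rG x) (ht : 0 < t) :
    gradHeatNorm t x ≤ √(deltaG x) * (radialHeat t (rG x) * (2 + rG x / (2 * t))) := by
  set R := radialHeat t (rG x)
  set D := deriv (radialHeat t) (rG x)
  have hR : 0 ≤ R := radialHeat_nonneg ht hr
  have hD : |D| ≤ R * (1 + rG x / (2 * t)) := abs_deriv_radialHeat_le ht hr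
  have heik : X0 rG x ^ 2 + X1 rG x ^ 2 + X2 rG x ^ 2 = 1 := eikonal_rG ha hr
  have hX0 : |X0 rG x| ≤ 1 := by
    rw [← sq_le_one_iff_abs_le_one]
    linarith [sq_nonneg (X1 rG x), sq_nonneg (X2 rG x)]
  have hcross : -(D * X0 rG x) ≤ |D| := by
    calc -(D * X0 rG x) ≤ |D * X0 rG x| := neg_le_abs _
      _ = |D| * |X0 rG x| := abs_mul _ _
      _ ≤ |D| := mul_le_of_le_one_right (abs_nonneg D) hX0
  have hnorm : gradHeatNorm t x ≤ √(deltaG x) * (|D| + R) := by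
    rw [gradHeatNorm, X0_heatK t ha hr, X1_heatK t ha hr, X2_heatK t ha hr]
    refine sqrt_le_iff.2 ⟨by positivity, ?_⟩
    calc (√(deltaG x) * (D * X0 rG x - R)) ^ 2 + (√(deltaG x) * (D * X1 rG x)) ^ 2
          + (√(deltaG x) * (D * X2 rG x)) ^ 2
        = √(deltaG x) ^ 2 * (|D| ^ 2 * (X0 rG x ^ 2 + X1 rG x ^ 2 + X2 rG x ^ 2)
            + 2 * R * -(D * X0 rG x) + R ^ 2) := by rw [sq_abs]; ring
      _ ≤ √(deltaG x) ^ 2 * (|D| ^ 2 * 1 + 2 * R * |D| + R ^ 2) := by rw [heik]; gcongr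
      _ = (√(deltaG x) * (|D| + R)) ^ 2 := by ring
  refine hnorm.trans (mul_le_mul_of_nonneg_left ?_ (sqrt_nonneg _))
  linarith

lemma abs_X0_heatK_le_gradHeatNorm (t : ℝ) (x : G) : |X0 (heatK t) x| ≤ gradHeatNorm t x :=
  abs_le_sqrt (by linarith [sq_nonneg (X1 (heatK t) x), sq_nonneg (X2 (heatK t) x)])

lemma abs_X1_heatK_le_gradHeatNorm (t : ℝ) (x : G) : |X1 (heatK t) x| ≤ gradHeatNorm t x :=
  abs_le_sqrt (by linarith [sq_nonneg (X0 (heatK t) x), sq_nonneg (X2 (heatK t) x)])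

lemma abs_X2_heatK_le_gradHeatNorm (t : ℝ) (x : G) : |X2 (heatK t) x| ≤ gradHeatNorm t x :=
  abs_le_sqrt (by linarith [sq_nonneg (X0 (heatK t) x), sq_nonneg (X1 (heatK t) x)])

end HeatKernel

theorem sup_Xi_heatK_small_general :
    ∃ C > (0 : ℝ), ∀ x : G, 0 < x.2.2 → 0 < rG x → ∀ t > (0 : ℝ),
      gradHeatNorm t x ≤ C * (1 + rG x) ^ 2 / rG x ^ 4 := by
  obtain ⟨K, hK, hradial⟩ := exists_radialHeat_mul_le
  refine ⟨2 * K, by positivity, fun x ha hr t ht ↦ ?_⟩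
  have : 0 < sinh (rG x) := sinh_pos_iff.2 hr
  calc gradHeatNorm t x
      ≤ √(deltaG x) * (radialHeat t (rG x) * (2 + rG x / (2 * t))) := gradHeatNorm_le ha hr ht
    _ ≤ exp (rG x) * (K * (1 + rG x) / rG x ^ 4 * (rG x / sinh (rG x))) := by
        rw [sqrt_deltaG ha]
        exact mul_le_mul (inv_le_exp_rG ha) (hradial _ hr t ht)
          (mul_nonneg (radialHeat_nonneg ht hr) (by positivity)) (exp_pos _).le
    _ = K * (1 + rG x) / rG x ^ 4 * (exp (rG x) * (rG x / sinh (rG x))) := by ring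
    _ ≤ K * (1 + rG x) / rG x ^ 4 * (2 * (1 + rG x)) := by
        refine mul_le_mul_of_nonneg_left ?_ (by positivity)
        linarith [exp_mul_div_sinh_le hr]
    _ = 2 * K * (1 + rG x) ^ 2 / rG x ^ 4 := by ring

theorem sup_Xi_heatK_small :
    ∃ C > (0 : ℝ), ∀ x : G, 0 < x.2.2 → 0 < rG x → rG x < 1 → ∀ t > (0 : ℝ),
      |X0 (heatK t) x| ≤ C / rG x ^ 4 ∧
      |X1 (heatK t) x| ≤ C / rG x ^ 4 ∧
      |X2 (heatK t) x| ≤ C / rG x ^ 4 := by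
  obtain ⟨C, hC, hgrad⟩ := sup_Xi_heatK_small_general
  refine ⟨C * 2 ^ 2, by positivity, fun x ha hr hr1 t ht ↦ ?_⟩
  have hle : gradHeatNorm t x ≤ C * 2 ^ 2 / rG x ^ 4 :=
    (hgrad x ha hr t ht).trans (by gcongr; linarith)
  exact ⟨(abs_X0_heatK_le_gradHeatNorm t x).trans hle,
    (abs_X1_heatK_le_gradHeatNorm t x).trans hle, (abs_X2_heatK_le_gradHeatNorm t x).trans hle⟩
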